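/- arXiv:1909.13835 — 3 statements merged into one kernel-verified Lean document; each statement's English description precedes it below -/
import Mathlib

section
/- Let K be a field, A and B K-algebras, (C, φ) a measuring from A to B, and n ≥ 1. Then the entrywise map φ_n : C → Hom_K(M_n(A), M_n(B)) defined by (φ_n(c)(M))_{ij} = φ(c)(M_{ij}) is a measuring from the matrix algebra M_n(A) to the matrix algebra M_n(B); that is, φ_n(c)(M N) = Σ (φ_n(c₁)(M)) (φ_n(c₂)(N)) and φ_n(c)(1) = ε(c) 1 for all c ∈ C and M, N ∈ M_n(A). -/
open TensorProduct PiTensorProduct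

/-- A coalgebra measuring of associative algebras: `φ c (a * a') = Σ (φ c₁ a) * (φ c₂ a')`
and `φ c 1 = ε c • 1`, where `comul c = Σ c₁ ⊗ c₂` in Sweedler notation. -/
def IsMeasuring (K : Type*) [Field K] {C A B : Type*}
    [AddCommGroup C] [Module K C] [Coalgebra K C]
    [Ring A] [Algebra K A] [Ring B] [Algebra K B]
    (φ : C →ₗ[K] A →ₗ[K] B) : Prop :=
  (∀ (c : C) (a a' : A),
      φ c (a * a') =
        TensorProduct.lift ((LinearMap.mul K B).compl₁₂ (φ.flip a) (φ.flip a'))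
          (Coalgebra.comul (R := K) c)) ∧
  ∀ c : C, φ c 1 = Coalgebra.counit (R := K) c • (1 : B)

/-- Cocommutativity of a coalgebra: the flip fixes the coproduct. -/
def IsCocomm (K : Type*) [Field K] (C : Type*)
    [AddCommGroup C] [Module K C] [Coalgebra K C] : Prop :=
  ∀ c : C, (TensorProduct.comm K C C) (Coalgebra.comul (R := K) c) = Coalgebra.comul (R := K) c

/-- If `(C, φ)` is a measuring from `A` to `B`, then the entrywise map
`Φ`, `(Φ c M) i j = φ c (M i j)`, is a measuring from `Mₙ(A)` to `Mₙ(B)`. -/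
theorem measuring_matrix
    (K : Type*) [Field K] (C A B : Type*)
    [AddCommGroup C] [Module K C] [Coalgebra K C]
    [Ring A] [Algebra K A] [Ring B] [Algebra K B]
    (φ : C →ₗ[K] A →ₗ[K] B) (hφ : IsMeasuring K φ)
    (n : ℕ) (hn : 1 ≤ n)
    (Φ : C →ₗ[K] Matrix (Fin n) (Fin n) A →ₗ[K] Matrix (Fin n) (Fin n) B)
    (hΦ : ∀ (c : C) (M : Matrix (Fin n) (Fin n) A) (i j : Fin n), Φ c M i j = φ c (M i j)) :
    IsMeasuring K Φ := by
  refine ⟨fun c M N => ?_, fun c => ?_⟩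
  · have key : ∀ (i j : Fin n) (t : C ⊗[K] C),
        TensorProduct.lift ((LinearMap.mul K (Matrix (Fin n) (Fin n) B)).compl₁₂
          (Φ.flip M) (Φ.flip N)) t i j =
        ∑ k, TensorProduct.lift ((LinearMap.mul K B).compl₁₂
          (φ.flip (M i k)) (φ.flip (N k j))) t := by
      intro i j t
      induction t using TensorProduct.induction_on with
      | zero => simp
      | tmul x y => simp [Matrix.mul_apply, hΦ]
      | add x y hx hy =>
        simp only [map_add, Matrix.add_apply, hx, hy, Finset.sum_add_distrib]
    ext i j
    rw [hΦ, key, Matrix.mul_apply, map_sum]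
    exact Finset.sum_congr rfl fun k _ => hφ.1 c _ _
  · ext i j
    rw [hΦ, Matrix.smul_apply, Matrix.one_apply, Matrix.one_apply]
    split_ifs
    · exact hφ.2 c
    · simp
end

section
/- Let K be a field, g and g' Lie algebras over K, and φ : C → Hom_K(g, g') a cocommutative measuring of Lie algebras. Then there exists a measuring of associative algebras U(φ) : C → Hom_K(U(g), U(g')) between the universal enveloping algebras such that U(φ)(c)(ι(x)) = ι(φ(c)(x)) for all c ∈ C, x ∈ g, where ι : g → U(g) and ι : g' → U(g') are the canonical maps; that is, U(φ)(c)(u v) = Σ U(φ)(c₁)(u) · U(φ)(c₂)(v) and U(φ)(c)(1) = ε(c) · 1 for all c ∈ C and u, v ∈ U(g). -/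
open TensorProduct PiTensorProduct

/-- The Lie bracket of `L` as a bilinear map. -/
noncomputable def lieBracketHom (K : Type*) [Field K] (L : Type*) [LieRing L] [LieAlgebra K L] :
    L →ₗ[K] L →ₗ[K] L :=
  LinearMap.mk₂ K (fun x y => ⁅x, y⁆) (fun _ _ _ => add_lie _ _ _) (fun _ _ _ => smul_lie _ _ _)
    (fun _ _ _ => lie_add _ _ _) (fun _ _ _ => lie_smul _ _ _)

/-- A coalgebra measuring of Lie algebras: `φ c ⁅a, b⁆ = Σ ⁅φ c₁ a, φ c₂ b⁆`,
where `comul c = Σ c₁ ⊗ c₂` in Sweedler notation. -/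
def IsLieMeasuring (K : Type*) [Field K] {C L L' : Type*}
    [AddCommGroup C] [Module K C] [Coalgebra K C]
    [LieRing L] [LieAlgebra K L] [LieRing L'] [LieAlgebra K L']
    (φ : C →ₗ[K] L →ₗ[K] L') : Prop :=
  ∀ (c : C) (a b : L),
    φ c ⁅a, b⁆ =
      TensorProduct.lift ((lieBracketHom K L').compl₁₂ (φ.flip a) (φ.flip b))
        (Coalgebra.comul (R := K) c)

section Helpers

attribute [local instance] LieRing.ofAssociativeRing

open WithConv
open Coalgebra hiding IsCocomm

variable {K : Type*} [Field K] {C g g' : Type*}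
    [AddCommGroup C] [Module K C] [Coalgebra K C]
    [LieRing g] [LieAlgebra K g] [LieRing g'] [LieAlgebra K g']

/-- The composite of the measuring with `ι`, as a map into the convolution algebra. -/
noncomputable def convFun (φ : C →ₗ[K] g →ₗ[K] g') (x : g) :
    WithConv (C →ₗ[K] UniversalEnvelopingAlgebra K g') :=
  toConv ((UniversalEnvelopingAlgebra.ι K : g' →ₗ⁅K⁆ UniversalEnvelopingAlgebra K g').toLinearMap ∘ₗ
    φ.flip x)

lemma convMul_eq_lift {B : Type*} [Ring B] [Algebra K B] (f h : WithConv (C →ₗ[K] B)) (c : C) :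
    (f * h) c = TensorProduct.lift ((LinearMap.mul K B).compl₁₂ f.ofConv h.ofConv)
      (comul (R := K) c) := by
  rw [LinearMap.convMul_apply]
  generalize (comul (R := K) c) = t
  induction t with
  | zero => simp
  | add a b ha hb => simp only [map_add, ha, hb]
  | tmul a b => simp

lemma convFun_lie (φ : C →ₗ[K] g →ₗ[K] g') (hφ : IsLieMeasuring K φ) (hcc : IsCocomm K C)
    (x y : g) : convFun φ ⁅x, y⁆ = convFun φ x * convFun φ y - convFun φ y * convFun φ x := by
  have key : ∀ c : C, UniversalEnvelopingAlgebra.ι K (φ c ⁅x, y⁆) =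
      (convFun φ x * convFun φ y) c - (convFun φ y * convFun φ x) c := by
    intro c
    rw [hφ, convMul_eq_lift, convMul_eq_lift]
    conv_rhs => arg 2; rw [← hcc c]
    generalize (comul (R := K) c) = t
    induction t with
    | zero => simp
    | add a b ha hb => simp only [map_add, ha, hb]; abel
    | tmul a b =>
      simp only [TensorProduct.lift.tmul, LinearMap.compl₁₂_apply, TensorProduct.comm_tmul,
        lieBracketHom, LinearMap.mk₂_apply, LieHom.map_lie, LieRing.of_associative_ring_bracket]
      rfl
  apply WithConv.ofConv_injective
  ext c
  exact key c

/-- The Lie algebra map into the convolution algebra. -/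
noncomputable def convLie (φ : C →ₗ[K] g →ₗ[K] g') (hφ : IsLieMeasuring K φ) (hcc : IsCocomm K C) :
    g →ₗ⁅K⁆ WithConv (C →ₗ[K] UniversalEnvelopingAlgebra K g') where
  toFun := convFun φ
  map_add' x y := by
    apply WithConv.ofConv_injective
    ext c
    simp [convFun]
  map_smul' r x := by
    apply WithConv.ofConv_injective
    ext c
    simp [convFun]
  map_lie' {x y} := by
    rw [LieRing.of_associative_ring_bracket]
    exact convFun_lie φ hφ hcc x y

end Helpers

/-- A cocommutative measuring of Lie algebras `φ : C → Hom_K(g, g')` induces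
a measuring of associative algebras `U(φ) : C → Hom_K(U(g), U(g'))` between the universal
enveloping algebras, compatible with the canonical maps `ι`. -/
theorem lieMeasuring_universalEnveloping
    (K : Type*) [Field K] (C g g' : Type*)
    [AddCommGroup C] [Module K C] [Coalgebra K C]
    [LieRing g] [LieAlgebra K g] [LieRing g'] [LieAlgebra K g']
    (φ : C →ₗ[K] g →ₗ[K] g') (hφ : IsLieMeasuring K φ) (hcc : IsCocomm K C) :
    ∃ U : C →ₗ[K] UniversalEnvelopingAlgebra K g →ₗ[K] UniversalEnvelopingAlgebra K g',
      IsMeasuring K U ∧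
      ∀ (c : C) (x : g),
        U c (UniversalEnvelopingAlgebra.ι K x) = UniversalEnvelopingAlgebra.ι K (φ c x) := by
  classical
  let F := UniversalEnvelopingAlgebra.lift K (convLie φ hφ hcc)
  let V : UniversalEnvelopingAlgebra K g →ₗ[K] C →ₗ[K] UniversalEnvelopingAlgebra K g' :=
    { toFun := fun u => (F u).ofConv
      map_add' := fun u v => by rw [map_add]; rfl
      map_smul' := fun r u => by rw [map_smul]; rfl }
  refine ⟨V.flip, ⟨fun c a a' => ?_, fun c => ?_⟩, fun c x => ?_⟩
  · have h : V.flip c (a * a') = (F a * F a') c := by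
      rw [← map_mul]; rfl
    rw [h, convMul_eq_lift]
    rfl
  · have h : V.flip c 1 = (1 : WithConv (C →ₗ[K] UniversalEnvelopingAlgebra K g')) c := by
      rw [← map_one F]; rfl
    rw [h, LinearMap.convOne_apply, Algebra.algebraMap_eq_smul_one]
  · have h : F (UniversalEnvelopingAlgebra.ι K x) = convFun φ x :=
      UniversalEnvelopingAlgebra.lift_ι_apply K (convLie φ hφ hcc) x
    change (F (UniversalEnvelopingAlgebra.ι K x)) c = _
    rw [h]
    rfl
end

section
/- Let K be a field, A and B K-algebras, and (C, φ) a measuring from A to B. If z ∈ A satisfies φ(c)(z) = 0 for all c ∈ C, then φ(c)(z' z z'') = 0 for all c ∈ C and all z', z'' ∈ A; consequently φ(c) vanishes on the two-sided ideal of A generated by z. -/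
open TensorProduct PiTensorProduct

/-- If `(C, φ)` is a measuring from `A` to `B` and `z ∈ A` satisfies
`φ c z = 0` for all `c`, then `φ c (z' * z * z'') = 0` for all `c, z', z''`; consequently each
`φ c` vanishes on the two-sided ideal of `A` generated by `z`. -/
theorem measuring_vanishes_on_twoSidedIdeal
    (K : Type*) [Field K] (C A B : Type*)
    [AddCommGroup C] [Module K C] [Coalgebra K C]
    [Ring A] [Algebra K A] [Ring B] [Algebra K B]
    (φ : C →ₗ[K] A →ₗ[K] B) (hφ : IsMeasuring K φ)
    (z : A) (hz : ∀ c : C, φ c z = 0) :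
    (∀ (c : C) (z' z'' : A), φ c (z' * z * z'') = 0) ∧
    (∀ c : C, ∀ x ∈ TwoSidedIdeal.span ({z} : Set A), φ c x = 0) := by
  have hl : ∀ a : A, (∀ c, φ c a = 0) → ∀ (b : A) (c : C), φ c (b * a) = 0 := by
    intro a ha b c
    have h0 : φ.flip a = 0 := by ext c; simpa using ha c
    rw [hφ.1, h0]
    induction Coalgebra.comul (R := K) c using TensorProduct.induction_on with
    | zero => simp
    | tmul x y => simp
    | add x y hx hy => rw [map_add, hx, hy, add_zero]
  have hr : ∀ a : A, (∀ c, φ c a = 0) → ∀ (b : A) (c : C), φ c (a * b) = 0 := by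
    intro a ha b c
    have h0 : φ.flip a = 0 := by ext c; simpa using ha c
    rw [hφ.1, h0]
    induction Coalgebra.comul (R := K) c using TensorProduct.induction_on with
    | zero => simp
    | tmul x y => simp
    | add x y hx hy => rw [map_add, hx, hy, add_zero]
  refine ⟨fun c z' z'' => hr _ (hl z hz z') z'' c, fun c x hx => ?_⟩
  have key : ∀ c, φ c x = 0 := by
    induction hx using TwoSidedIdeal.span_induction with
    | mem x h => rw [Set.mem_singleton_iff.mp h]; exact hz
    | zero => simp
    | add x y _ _ hx hy => intro c; rw [map_add, hx, hy, add_zero]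
    | neg x _ hx => intro c; rw [map_neg, hx, neg_zero]
    | left_absorb a x _ hx => exact hl x hx a
    | right_absorb b x _ hx => exact hr x hx b
  exact key c
end
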